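/- Let γ₀ > 1 and let W be a random variable on a probability space with P(W ≤ t) = t^(γ₀−1) for all t ∈ [0,1] (so 0 < W ≤ 1 almost surely). Let b ∈ (0,1] and let r satisfy 0 < r ≤ b/2. Then E[ 1 − W / max(W + r, b) ] ≥ 2^(−γ₀) · b^(γ₀−1). -/

import Mathlib

open MeasureTheory

/-!
On `{W ≤ b/2}` we have `W + r ≤ b`, so the integrand equals `1 - W/b ≥ 1/2`; elsewhere it is
nonnegative. Hence the integral is at least `P(W ≤ b/2)/2 = (b/2)^(γ₀-1)/2`, which is the
claimed bound. The integrand is bounded, hence integrable, because `P(W ≤ 0) = 0`.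
-/

/-- for the exact power-law propensity distribution
(`P(W ≤ t) = t^(γ₀−1)` on `[0,1]`), a one-directional propensity error `r ≤ b/2`
creates clipping bias of order `b^(γ₀−1)`:
`E[1 − W/max(W + r, b)] ≥ 2^(−γ₀)·b^(γ₀−1)`. -/
theorem stmt14 {Ω : Type*} [MeasurableSpace Ω] (P : Measure Ω) [IsProbabilityMeasure P]
    (γ₀ : ℝ) (hγ : 1 < γ₀)
    (W : Ω → ℝ) (hW : Measurable W)
    (hcdf : ∀ t ∈ Set.Icc (0 : ℝ) 1, (P {ω | W ω ≤ t}).toReal = t ^ (γ₀ - 1))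
    (b r : ℝ) (hb : b ∈ Set.Ioc (0 : ℝ) 1) (hr : 0 < r) (hrb : r ≤ b / 2) :
    (2 : ℝ) ^ (-γ₀) * b ^ (γ₀ - 1)
      ≤ ∫ ω, (1 - W ω / max (W ω + r) b) ∂P := by
  obtain ⟨hb0, hb1⟩ := hb
  have hM : ∀ ω, 0 < max (W ω + r) b := fun ω => lt_max_of_lt_right hb0
  have hpos : ∀ᵐ ω ∂P, 0 < W ω := by
    have h0 := hcdf 0 ⟨le_rfl, zero_le_one⟩
    rw [Real.zero_rpow (by linarith)] at h0
    have h1 : P {ω | W ω ≤ 0} = 0 :=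
      ((ENNReal.toReal_eq_zero_iff _).1 h0).resolve_right (measure_ne_top _ _)
    simpa [ae_iff] using h1
  have hs : MeasurableSet {ω | W ω ≤ b / 2} := measurableSet_le hW measurable_const
  have hle : ∀ ω, W ω / max (W ω + r) b ≤ 1 := fun ω =>
    (div_le_one (hM ω)).2 (by linarith [le_max_left (W ω + r) b])
  -- Without integrability the Bochner integral would be the junk value `0`.
  have hint : Integrable (fun ω => 1 - W ω / max (W ω + r) b) P := by
    refine Integrable.of_bound (C := 1) (Measurable.aestronglyMeasurable (by fun_prop)) ?_
    filter_upwards [hpos] with ω hω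
    have h1 := div_nonneg hω.le (hM ω).le
    rw [Real.norm_eq_abs, abs_le]
    constructor <;> linarith [hle ω]
  have hmono : ∫ ω, {ω | W ω ≤ b / 2}.indicator (fun _ => (1 / 2 : ℝ)) ω ∂P
      ≤ ∫ ω, (1 - W ω / max (W ω + r) b) ∂P := by
    refine integral_mono ((integrable_const _).indicator hs) hint fun ω => ?_
    by_cases h : W ω ≤ b / 2
    · have h2 : W ω / b ≤ 1 / 2 := by
        rw [div_le_iff₀ hb0]; linarith
      simp only [Set.indicator, Set.mem_ofPred_eq, h, if_true]
      rw [max_eq_right (by linarith)]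
      linarith
    · simp only [Set.indicator, Set.mem_ofPred_eq, h, if_false]
      linarith [hle ω]
  refine le_trans (le_of_eq ?_) hmono
  rw [integral_indicator_const _ hs, Measure.real, hcdf (b / 2) ⟨by linarith, by linarith⟩,
    Real.div_rpow hb0.le zero_le_two, smul_eq_mul, Real.rpow_neg zero_le_two,
    Real.rpow_sub_one two_ne_zero]
  have : (2 : ℝ) ^ γ₀ ≠ 0 := (Real.rpow_pos_of_pos two_pos _).ne'
  field_simp
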